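/- Let C be a spherical pre-fusion category over a commutative ring k. For every simple object i of C and every endomorphism f ∈ End(i): f = dim(i)^{-1} · tr(f) · id_i, where dim(i) is invertible in k; equivalently, dim(i)·f = tr(f)·id_i. -/

import Mathlib

open CategoryTheory CategoryTheory.Limits MonoidalCategory

universe v u w

/-- A pivotal category: a monoidal category in which every object is equipped with a dual
object and with evaluation/coevaluation morphisms forming a left duality and a right
duality, such that left and right duals of morphisms coincide, the left and right
monoidal constraints coincide, and the left and right evaluations of the unit coincide. -/
class PivotalCat (C : Type u) [Category.{v} C] [MonoidalCategory C] where
  dual : C → C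
  evl : ∀ X : C, dual X ⊗ X ⟶ 𝟙_ C
  coevl : ∀ X : C, 𝟙_ C ⟶ X ⊗ dual X
  evr : ∀ X : C, X ⊗ dual X ⟶ 𝟙_ C
  coevr : ∀ X : C, 𝟙_ C ⟶ dual X ⊗ X
  left_zigzag₁ : ∀ X : C,
    (λ_ X).inv ≫ (coevl X ▷ X) ≫ (α_ X (dual X) X).hom ≫ (X ◁ evl X) ≫ (ρ_ X).hom = 𝟙 X
  left_zigzag₂ : ∀ X : C,
    (ρ_ (dual X)).inv ≫ (dual X ◁ coevl X) ≫ (α_ (dual X) X (dual X)).inv ≫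
      (evl X ▷ dual X) ≫ (λ_ (dual X)).hom = 𝟙 (dual X)
  right_zigzag₁ : ∀ X : C,
    (ρ_ X).inv ≫ (X ◁ coevr X) ≫ (α_ X (dual X) X).inv ≫ (evr X ▷ X) ≫ (λ_ X).hom = 𝟙 X
  right_zigzag₂ : ∀ X : C,
    (λ_ (dual X)).inv ≫ (coevr X ▷ dual X) ≫ (α_ (dual X) X (dual X)).hom ≫
      (dual X ◁ evr X) ≫ (ρ_ (dual X)).hom = 𝟙 (dual X)
  ldual_eq_rdual : ∀ {X Y : C} (f : X ⟶ Y),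
    (ρ_ (dual Y)).inv ≫ (dual Y ◁ coevl X) ≫ (dual Y ◁ (f ▷ dual X)) ≫
      (α_ (dual Y) Y (dual X)).inv ≫ (evl Y ▷ dual X) ≫ (λ_ (dual X)).hom =
    (λ_ (dual Y)).inv ≫ (coevr X ▷ dual Y) ≫ ((dual X ◁ f) ▷ dual Y) ≫
      (α_ (dual X) Y (dual Y)).hom ≫ (dual X ◁ evr Y) ≫ (ρ_ (dual X)).hom
  constraint_eq : ∀ X Y : C,
    (ρ_ (dual X ⊗ dual Y)).inv ≫ ((dual X ⊗ dual Y) ◁ coevl (Y ⊗ X)) ≫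
      (α_ (dual X) (dual Y) ((Y ⊗ X) ⊗ dual (Y ⊗ X))).hom ≫
      (dual X ◁ (α_ (dual Y) (Y ⊗ X) (dual (Y ⊗ X))).inv) ≫
      (dual X ◁ (((α_ (dual Y) Y X).inv ≫ (evl Y ▷ X) ≫ (λ_ X).hom) ▷ dual (Y ⊗ X))) ≫
      (α_ (dual X) X (dual (Y ⊗ X))).inv ≫ (evl X ▷ dual (Y ⊗ X)) ≫ (λ_ (dual (Y ⊗ X))).hom =
    (λ_ (dual X ⊗ dual Y)).inv ≫ (coevr (Y ⊗ X) ▷ (dual X ⊗ dual Y)) ≫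
      (α_ (dual (Y ⊗ X)) (Y ⊗ X) (dual X ⊗ dual Y)).hom ≫
      (dual (Y ⊗ X) ◁ ((α_ Y X (dual X ⊗ dual Y)).hom ≫ (Y ◁ (α_ X (dual X) (dual Y)).inv) ≫
        (Y ◁ (evr X ▷ dual Y)) ≫ (Y ◁ (λ_ (dual Y)).hom) ≫ evr Y)) ≫
      (ρ_ (dual (Y ⊗ X))).hom
  ev_unit : (ρ_ (dual (𝟙_ C))).inv ≫ evl (𝟙_ C) = (λ_ (dual (𝟙_ C))).inv ≫ evr (𝟙_ C)

namespace PivotalCat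

variable {C : Type u} [Category.{v} C] [MonoidalCategory C] [PivotalCat C]

/-- The (common left = right) dual of a morphism. -/
def pdual {X Y : C} (f : X ⟶ Y) : dual Y ⟶ dual X :=
  (ρ_ (dual Y)).inv ≫ (dual Y ◁ coevl X) ≫ (dual Y ◁ (f ▷ dual X)) ≫
    (α_ (dual Y) Y (dual X)).inv ≫ (evl Y ▷ dual X) ≫ (λ_ (dual X)).hom

/-- The (common left = right) pivotal monoidal constraint `X* ⊗ Y* ⟶ (Y ⊗ X)*`. -/
def mcon (X Y : C) : dual X ⊗ dual Y ⟶ dual (Y ⊗ X) :=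
  (ρ_ (dual X ⊗ dual Y)).inv ≫ ((dual X ⊗ dual Y) ◁ coevl (Y ⊗ X)) ≫
    (α_ (dual X) (dual Y) ((Y ⊗ X) ⊗ dual (Y ⊗ X))).hom ≫
    (dual X ◁ (α_ (dual Y) (Y ⊗ X) (dual (Y ⊗ X))).inv) ≫
    (dual X ◁ (((α_ (dual Y) Y X).inv ≫ (evl Y ▷ X) ≫ (λ_ X).hom) ▷ dual (Y ⊗ X))) ≫
    (α_ (dual X) X (dual (Y ⊗ X))).inv ≫ (evl X ▷ dual (Y ⊗ X)) ≫ (λ_ (dual (Y ⊗ X))).hom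

/-- The left trace of an endomorphism. -/
def trl {X : C} (f : X ⟶ X) : 𝟙_ C ⟶ 𝟙_ C := coevr X ≫ (dual X ◁ f) ≫ evl X

/-- The right trace of an endomorphism. -/
def trr {X : C} (f : X ⟶ X) : 𝟙_ C ⟶ 𝟙_ C := coevl X ≫ (f ▷ dual X) ≫ evr X

/-- The left dimension of an object, as an endomorphism of the unit. -/
def diml (X : C) : 𝟙_ C ⟶ 𝟙_ C := trl (𝟙 X)

/-- The right dimension of an object, as an endomorphism of the unit. -/
def dimr (X : C) : 𝟙_ C ⟶ 𝟙_ C := trr (𝟙 X)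

/-- The permutation map `σ_{X,Y} : Hom(𝟙, X ⊗ Y) → Hom(𝟙, Y ⊗ X)`,
`α ↦ (ev_l X ⊗ id_{Y⊗X}) ∘ (id_{X*} ⊗ α ⊗ id_X) ∘ coev_r X`. -/
def sigmaMap (X Y : C) (a : 𝟙_ C ⟶ X ⊗ Y) : 𝟙_ C ⟶ Y ⊗ X :=
  coevr X ≫ (dual X ◁ (λ_ X).inv) ≫ (dual X ◁ (a ▷ X)) ≫ (dual X ◁ (α_ X Y X).hom) ≫
    (α_ (dual X) X (Y ⊗ X)).inv ≫ (evl X ▷ (Y ⊗ X)) ≫ (λ_ (Y ⊗ X)).hom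

end PivotalCat

/-- A pivotal category is spherical when left and right traces coincide. -/
class SphericalCat (C : Type u) [Category.{v} C] [MonoidalCategory C] [PivotalCat C] : Prop where
  tr_eq : ∀ {X : C} (f : X ⟶ X), PivotalCat.trl f = PivotalCat.trr f
/-- An object `X` of a `k`-linear category is simple if `λ ↦ λ • id_X` is a bijection
`k → End X`. -/
def IsSimpleObj (k : Type w) [CommRing k] {C : Type u} [Category.{v} C]
    [Preadditive C] [CategoryTheory.Linear k C] (X : C) : Prop :=
  Function.Bijective fun a : k => a • 𝟙 X

/-- A monoidal `k`-category: the hom-sets are `k`-modules, composition and the monoidal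
product are `k`-bilinear (all this is encoded in the instance parameters), and
`End(𝟙)` is free of rank one via `λ ↦ λ • id`. -/
class MonoidalKCat (k : Type w) [CommRing k] (C : Type u) [Category.{v} C]
    [Preadditive C] [CategoryTheory.Linear k C] [MonoidalCategory C]
    [MonoidalPreadditive C] [CategoryTheory.MonoidalLinear k C] : Prop where
  unit_free : Function.Bijective fun a : k => a • 𝟙 (𝟙_ C)

/-- The identification `End(𝟙) = k` of a monoidal `k`-category. -/
noncomputable def toScalar (k : Type w) [CommRing k] {C : Type u} [Category.{v} C]
    [Preadditive C] [CategoryTheory.Linear k C] [MonoidalCategory C]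
    [MonoidalPreadditive C] [CategoryTheory.MonoidalLinear k C] [MonoidalKCat k C]
    (f : 𝟙_ C ⟶ 𝟙_ C) : k :=
  (Equiv.ofBijective (fun a : k => a • 𝟙 (𝟙_ C))
    (MonoidalKCat.unit_free (k := k) (C := C))).symm f

/-- The left dimension of an object as an element of `k`. -/
noncomputable def sdiml (k : Type w) [CommRing k] {C : Type u} [Category.{v} C]
    [Preadditive C] [CategoryTheory.Linear k C] [MonoidalCategory C]
    [MonoidalPreadditive C] [CategoryTheory.MonoidalLinear k C] [PivotalCat C]
    [MonoidalKCat k C] (X : C) : k :=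
  toScalar k (PivotalCat.diml X)

/-- The right dimension of an object as an element of `k`. -/
noncomputable def sdimr (k : Type w) [CommRing k] {C : Type u} [Category.{v} C]
    [Preadditive C] [CategoryTheory.Linear k C] [MonoidalCategory C]
    [MonoidalPreadditive C] [CategoryTheory.MonoidalLinear k C] [PivotalCat C]
    [MonoidalKCat k C] (X : C) : k :=
  toScalar k (PivotalCat.dimr X)

/-- A pre-fusion category over `k`: a pivotal `k`-category in which every finite family of
objects has a direct sum, every object is a finite direct sum of simple objects, and there
are no nonzero morphisms between non-isomorphic simple objects. -/
class PreFusionCat (k : Type w) [CommRing k] (C : Type u) [Category.{v} C]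
    [Preadditive C] [CategoryTheory.Linear k C] [MonoidalCategory C]
    [MonoidalPreadditive C] [CategoryTheory.MonoidalLinear k C]
    [CategoryTheory.Limits.HasFiniteBiproducts C] [PivotalCat C] [MonoidalKCat k C] : Prop where
  semisimple : ∀ X : C, ∃ (n : ℕ) (obj : Fin n → C) (p : ∀ a, X ⟶ obj a) (q : ∀ a, obj a ⟶ X),
    (∀ a, IsSimpleObj k (obj a)) ∧ (∑ a, p a ≫ q a = 𝟙 X) ∧
    (∀ a, q a ≫ p a = 𝟙 (obj a)) ∧ (∀ a b, a ≠ b → q a ≫ p b = 0)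
  simple_hom_zero : ∀ {i j : C}, IsSimpleObj k i → IsSimpleObj k j →
    IsEmpty (i ≅ j) → ∀ f : i ⟶ j, f = 0

/-- A fusion category over `k`: a pre-fusion category with finitely many isomorphism
classes of simple objects. -/
class FusionCat (k : Type w) [CommRing k] (C : Type u) [Category.{v} C]
    [Preadditive C] [CategoryTheory.Linear k C] [MonoidalCategory C]
    [MonoidalPreadditive C] [CategoryTheory.MonoidalLinear k C]
    [CategoryTheory.Limits.HasFiniteBiproducts C] [PivotalCat C] [MonoidalKCat k C]
    [PreFusionCat k C] : Prop where
  finitely_many_simples : ∃ S : Set C, S.Finite ∧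
    ∀ i : C, IsSimpleObj k i → ∃ j ∈ S, Nonempty (i ≅ j)

/-- A representative set of simple objects: it contains the unit object, consists of simple
objects, and every simple object is isomorphic to exactly one of its elements. -/
def IsRepresentativeSet (k : Type w) [CommRing k] (C : Type u) [Category.{v} C]
    [Preadditive C] [CategoryTheory.Linear k C] [MonoidalCategory C] (I : Set C) : Prop :=
  (𝟙_ C) ∈ I ∧ (∀ i ∈ I, IsSimpleObj k i) ∧
    ∀ X : C, IsSimpleObj k X → ∃! i, i ∈ I ∧ Nonempty (X ≅ i)

/-- The dimension of a fusion category with (finite) representative set `I` of simple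
objects: `dim C = ∑_{i ∈ I} dim_l(i) · dim_r(i)`. -/
noncomputable def catDim (k : Type w) [CommRing k] {C : Type u} [Category.{v} C]
    [Preadditive C] [CategoryTheory.Linear k C] [MonoidalCategory C]
    [MonoidalPreadditive C] [CategoryTheory.MonoidalLinear k C] [PivotalCat C]
    [MonoidalKCat k C] (I : Finset C) : k :=
  ∑ i ∈ I, sdiml k i * sdimr k i

/-!
Simplicity of `i` writes `f` as `a • 𝟙 i`, so everything reduces to the invertibility of `dim i`.
By duality `Hom(𝟙, i* ⊗ i)` and `Hom(i* ⊗ i, 𝟙)` are both identified with `End i = k`, and are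
spanned by `coevr i` and `evl i`. Since `coevr i` is nonzero (unless `k = 0`), semisimplicity makes
the unit a retract of `i* ⊗ i`. Both structure maps of this retract are scalar multiples of
`coevr i` and `evl i`, so some scalar multiple of `coevr i ≫ evl i = dim i` is the identity.
-/

section ExactPairing

variable {C : Type u} [Category.{v} C] [MonoidalCategory C] {X Y : C} [ExactPairing X Y]

theorem exists_eq_coevaluation_comp_whiskerLeft {Z : C} (h : 𝟙_ C ⟶ X ⊗ Z) :
    ∃ f : Y ⟶ Z, h = η_ X Y ≫ X ◁ f := by
  refine ⟨(ρ_ Y).inv ≫ (tensorLeftHomEquiv _ X Y _).symm h, ?_⟩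
  apply (tensorLeftHomEquiv _ X Y _).symm.injective
  simp only [tensorLeftHomEquiv_symm_coevaluation_comp_whiskerLeft, Iso.hom_inv_id_assoc]

theorem exists_eq_whiskerLeft_comp_evaluation {Z : C} (h : Y ⊗ Z ⟶ 𝟙_ C) :
    ∃ f : Z ⟶ X, h = Y ◁ f ≫ ε_ X Y := by
  let : HasLeftDual Y := ⟨X⟩
  let f : Z ⟶ X := tensorLeftHomEquiv _ X Y _ h ≫ (ρ_ X).hom
  refine ⟨f, (tensorLeftHomEquiv _ X Y _).injective ?_⟩
  calc tensorLeftHomEquiv _ X Y _ h = f ≫ (ρ_ X).inv := by simp [f]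
    _ = _ := (tensorLeftHomEquiv_whiskerLeft_comp_evaluation (Z := Y) f).symm

theorem id_eq_zero_of_coevaluation_eq_zero [Preadditive C] [MonoidalPreadditive C]
    (h : η_ X Y = 0) : 𝟙 Y = 0 := by
  have zigzag := ExactPairing.coevaluation_evaluation X Y
  rw [h, MonoidalPreadditive.whiskerLeft_zero, zero_comp] at zigzag
  calc 𝟙 Y = (ρ_ Y).inv ≫ ((ρ_ Y).hom ≫ (λ_ Y).inv) ≫ (λ_ Y).hom := by simp
    _ = 0 := by rw [← zigzag, zero_comp, comp_zero]

end ExactPairing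

namespace IsSimpleObj

variable {k : Type w} [CommRing k] {C : Type u} [Category.{v} C] [Preadditive C]
  [CategoryTheory.Linear k C]

theorem exists_eq_smul_id {X : C} (hX : IsSimpleObj k X) (f : X ⟶ X) : ∃ a : k, f = a • 𝟙 X :=
  (hX.2 f).imp fun _ h => h.symm

theorem id_ne_zero [Nontrivial k] {X : C} (hX : IsSimpleObj k X) : 𝟙 X ≠ 0 := fun h =>
  one_ne_zero (α := k) (hX.1 (by simp [h]))

variable [MonoidalCategory C] [MonoidalPreadditive C] [MonoidalLinear k C]
  {X Y : C} [ExactPairing X Y]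

theorem exists_eq_smul_coevaluation (hY : IsSimpleObj k Y) (h : 𝟙_ C ⟶ X ⊗ Y) :
    ∃ a : k, h = a • η_ X Y := by
  obtain ⟨f, rfl⟩ := exists_eq_coevaluation_comp_whiskerLeft (Y := Y) h
  obtain ⟨a, rfl⟩ := hY.exists_eq_smul_id f
  exact ⟨a, by simp⟩

theorem exists_eq_smul_evaluation (hX : IsSimpleObj k X) (h : Y ⊗ X ⟶ 𝟙_ C) :
    ∃ a : k, h = a • ε_ X Y := by
  obtain ⟨f, rfl⟩ := exists_eq_whiskerLeft_comp_evaluation (X := X) h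
  obtain ⟨a, rfl⟩ := hX.exists_eq_smul_id f
  exact ⟨a, by simp⟩

end IsSimpleObj

namespace PivotalCat

section ExactPairing

variable {C : Type u} [Category.{v} C] [MonoidalCategory C] [PivotalCat C]

/-- The left duality `(evl X, coevl X)` of a pivotal category, as a Mathlib `ExactPairing`: there
the evaluation of a pairing of `X` with `Y` is a map `Y ⊗ X ⟶ 𝟙`, so `dual X` comes second. -/
@[reducible]
def leftExactPairing (X : C) : ExactPairing X (dual X) where
  coevaluation' := coevl X
  evaluation' := evl X
  coevaluation_evaluation' := by
    rw [← cancel_epi (ρ_ (dual X)).inv, ← cancel_mono (λ_ (dual X)).hom]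
    simpa using left_zigzag₂ X
  evaluation_coevaluation' := by
    rw [← cancel_epi (λ_ X).inv, ← cancel_mono (ρ_ X).hom]
    simpa using left_zigzag₁ X

/-- The right duality `(evr X, coevr X)` of a pivotal category, as a Mathlib `ExactPairing`, with
`dual X` first. -/
@[reducible]
def rightExactPairing (X : C) : ExactPairing (dual X) X where
  coevaluation' := coevr X
  evaluation' := evr X
  coevaluation_evaluation' := by
    rw [← cancel_epi (ρ_ X).inv, ← cancel_mono (λ_ X).hom]
    simpa using right_zigzag₁ X
  evaluation_coevaluation' := by
    rw [← cancel_epi (λ_ (dual X)).inv, ← cancel_mono (ρ_ (dual X)).hom]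
    simpa using right_zigzag₂ X

theorem diml_eq_coevr_comp_evl (X : C) : diml X = coevr X ≫ evl X := by
  simp [diml, trl]

end ExactPairing

section Linear

variable {k : Type w} [CommRing k] {C : Type u} [Category.{v} C] [Preadditive C]
  [CategoryTheory.Linear k C] [MonoidalCategory C] [MonoidalPreadditive C] [PivotalCat C]
  {X : C}

theorem coevr_ne_zero [Nontrivial k] (hX : IsSimpleObj k X) : coevr X ≠ 0 := fun h =>
  letI := rightExactPairing X
  hX.id_ne_zero (id_eq_zero_of_coevaluation_eq_zero (X := dual X) h)

variable [MonoidalLinear k C]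

theorem trl_smul (a : k) (f : X ⟶ X) : trl (a • f) = a • trl f := by
  simp [trl]

theorem exists_eq_smul_coevr (hX : IsSimpleObj k X) (h : 𝟙_ C ⟶ dual X ⊗ X) :
    ∃ a : k, h = a • coevr X :=
  letI := rightExactPairing X
  hX.exists_eq_smul_coevaluation h

theorem exists_eq_smul_evl (hX : IsSimpleObj k X) (h : dual X ⊗ X ⟶ 𝟙_ C) :
    ∃ a : k, h = a • evl X :=
  letI := leftExactPairing X
  hX.exists_eq_smul_evaluation h

end Linear

end PivotalCat

section Scalar

variable {k : Type w} [CommRing k] {C : Type u} [Category.{v} C] [Preadditive C]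
  [CategoryTheory.Linear k C] [MonoidalCategory C] [MonoidalPreadditive C] [MonoidalLinear k C]
  [MonoidalKCat k C]

theorem toScalar_eq_iff {f : 𝟙_ C ⟶ 𝟙_ C} {a : k} : toScalar k f = a ↔ f = a • 𝟙 (𝟙_ C) :=
  Equiv.symm_apply_eq _

theorem toScalar_smul_id (f : 𝟙_ C ⟶ 𝟙_ C) : toScalar k f • 𝟙 (𝟙_ C) = f :=
  (toScalar_eq_iff.mp rfl).symm

theorem toScalar_id : toScalar k (𝟙 (𝟙_ C)) = 1 :=
  toScalar_eq_iff.mpr (one_smul k _).symm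

theorem toScalar_smul (a : k) (f : 𝟙_ C ⟶ 𝟙_ C) : toScalar k (a • f) = a * toScalar k f :=
  toScalar_eq_iff.mpr (by rw [mul_smul, toScalar_smul_id])

theorem sdiml_smul_eq_toScalar_trl_smul_id [PivotalCat C] {i : C} (hi : IsSimpleObj k i)
    (f : i ⟶ i) : sdiml k i • f = toScalar k (PivotalCat.trl f) • 𝟙 i := by
  obtain ⟨a, rfl⟩ := hi.exists_eq_smul_id f
  have trace_eq : toScalar k (PivotalCat.trl (a • 𝟙 i)) = a * sdiml k i := by
    rw [PivotalCat.trl_smul, toScalar_smul, sdiml, PivotalCat.diml]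
  rw [trace_eq, smul_smul, mul_comm]

end Scalar

section PreFusion

variable {k : Type w} [CommRing k] {C : Type u} [Category.{v} C] [Preadditive C]
  [CategoryTheory.Linear k C] [MonoidalCategory C] [MonoidalPreadditive C] [MonoidalLinear k C]
  [HasFiniteBiproducts C] [PivotalCat C] [MonoidalKCat k C] [PreFusionCat k C]

theorem PreFusionCat.nonempty_retract_of_ne_zero {j X : C} (hj : IsSimpleObj k j) {u : j ⟶ X}
    (hu : u ≠ 0) : Nonempty (Retract j X) := by
  obtain ⟨n, obj, p, q, obj_simple, sum_eq_id, section_retraction, -⟩ :=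
    PreFusionCat.semisimple (k := k) X
  obtain ⟨a, component_ne_zero⟩ : ∃ a, u ≫ p a ≠ 0 := by
    by_contra! components_eq_zero
    refine hu ?_
    calc u = ∑ a, (u ≫ p a) ≫ q a := by
            simp only [Category.assoc, ← Preadditive.comp_sum, sum_eq_id, Category.comp_id]
      _ = 0 := by simp only [components_eq_zero, zero_comp, Finset.sum_const_zero]
  obtain ⟨φ⟩ : Nonempty (j ≅ obj a) := by
    by_contra not_iso
    exact component_ne_zero <|
      PreFusionCat.simple_hom_zero hj (obj_simple a) (not_nonempty_iff.mp not_iso) _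
  exact ⟨(Retract.ofIso φ).trans ⟨q a, p a, section_retraction a⟩⟩

theorem isUnit_sdiml {i : C} (hi : IsSimpleObj k i) : IsUnit (sdiml k i) := by
  nontriviality k
  obtain ⟨unit_retract⟩ := PreFusionCat.nonempty_retract_of_ne_zero
    (MonoidalKCat.unit_free (k := k)) (PivotalCat.coevr_ne_zero hi)
  obtain ⟨a, i_eq⟩ := PivotalCat.exists_eq_smul_coevr hi unit_retract.i
  obtain ⟨b, r_eq⟩ := PivotalCat.exists_eq_smul_evl hi unit_retract.r
  have smul_diml_eq_id : (b * a) • PivotalCat.diml i = 𝟙 (𝟙_ C) := by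
    rw [← unit_retract.retract, i_eq, r_eq, PivotalCat.diml_eq_coevr_comp_evl]
    simp only [Linear.smul_comp, Linear.comp_smul, smul_smul, mul_comm]
  refine IsUnit.of_mul_eq_one_right (b * a) ?_
  rw [sdiml, ← toScalar_smul, smul_diml_eq_id, toScalar_id]

theorem spherical_preFusion_endo_simple_general {i : C} (hi : IsSimpleObj k i) (f : i ⟶ i) :
    IsUnit (sdiml k i) ∧
    sdiml k i • f = toScalar k (PivotalCat.trl f) • 𝟙 i ∧
    f = Ring.inverse (sdiml k i) • toScalar k (PivotalCat.trl f) • 𝟙 i := by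
  have dim_smul := sdiml_smul_eq_toScalar_trl_smul_id hi f
  refine ⟨isUnit_sdiml hi, dim_smul, ?_⟩
  rw [← dim_smul, smul_smul, Ring.inverse_mul_cancel _ (isUnit_sdiml hi), one_smul]

end PreFusion

/-- In a spherical pre-fusion category over a commutative ring `k`, any endomorphism `f` of
a simple object `i` satisfies `f = dim(i)⁻¹ · tr(f) · id_i`, where `dim(i)` is invertible
in `k`; equivalently, `dim(i) · f = tr(f) · id_i`. -/
theorem spherical_preFusion_endo_simple (k : Type w) [CommRing k] (C : Type u)
    [Category.{v} C] [Preadditive C] [CategoryTheory.Linear k C] [MonoidalCategory C]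
    [MonoidalPreadditive C] [CategoryTheory.MonoidalLinear k C]
    [CategoryTheory.Limits.HasFiniteBiproducts C] [PivotalCat C] [MonoidalKCat k C]
    [PreFusionCat k C] [SphericalCat C] {i : C} (hi : IsSimpleObj k i) (f : i ⟶ i) :
    IsUnit (sdiml k i) ∧
    sdiml k i • f = toScalar k (PivotalCat.trl f) • 𝟙 i ∧
    f = Ring.inverse (sdiml k i) • toScalar k (PivotalCat.trl f) • 𝟙 i := by
  exact spherical_preFusion_endo_simple_general hi f
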